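/- arXiv:2407.18863 — 2 statements merged into one kernel-verified Lean document; each statement's English description precedes it below -/
import Mathlib

section
/- Let X be a proper geodesic metric space with basepoint x₀ which is Morse-dichotomous, i.e. there is a function c assigning to each Morse gauge M a constant c(M) ≥ 0 such that every M-Morse geodesic in X is c(M)-contracting. Then the Morse boundary of X is strongly σ-compact: there exists a sequence (M_n)_{n∈ℕ} of Morse gauges such that every Morse geodesic ray based at x₀ is M_n-Morse for some n, and for every Morse gauge M there exists n = n(M) such that every M-Morse geodesic ray based at x₀ is M_n-Morse. -/
open Metric Set Filter

namespace MorseLTG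

/-- A Morse gauge: a non-decreasing continuous function `[1, ∞) → [0, ∞)`. -/
def IsMorseGauge (M : ℝ → ℝ) : Prop :=
  MonotoneOn M (Set.Ici 1) ∧ ContinuousOn M (Set.Ici 1) ∧ ∀ t : ℝ, 1 ≤ t → 0 ≤ M t

section Space

variable {X : Type*} [MetricSpace X]

/-- `γ` is a `Q`-quasi-geodesic on the set `I ⊆ ℝ`. -/
def QGeoOn (Q : ℝ) (I : Set ℝ) (γ : ℝ → X) : Prop :=
  ContinuousOn γ I ∧ ∀ s ∈ I, ∀ t ∈ I,
    |t - s| / Q - Q ≤ dist (γ s) (γ t) ∧ dist (γ s) (γ t) ≤ Q * |t - s| + Q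

/-- `γ` is `M`-Morse on `I`: every `Q`-quasi-geodesic with endpoints on `γ|_I`
stays in the closed `M Q`-neighbourhood of the corresponding subsegment of `γ`. -/
def MorseOn (M : ℝ → ℝ) (I : Set ℝ) (γ : ℝ → X) : Prop :=
  ∀ Q : ℝ, 1 ≤ Q → ∀ s ∈ I, ∀ t ∈ I, s ≤ t →
    ∀ (lam : ℝ → X) (a b : ℝ), a ≤ b → QGeoOn Q (Set.Icc a b) lam →
      lam a = γ s → lam b = γ t →
      ∀ u ∈ Set.Icc a b, ∃ v ∈ Set.Icc s t, dist (lam u) (γ v) ≤ M Q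

/-- `γ` is a geodesic on `I` (an isometric embedding). -/
def GeodesicOn (I : Set ℝ) (γ : ℝ → X) : Prop :=
  ∀ s ∈ I, ∀ t ∈ I, dist (γ s) (γ t) = |t - s|

/-- A geodesic ray based at `x₀`. -/
def GeodesicRayFrom (x₀ : X) (γ : ℝ → X) : Prop :=
  γ 0 = x₀ ∧ GeodesicOn (Set.Ici 0) γ

/-- A Morse geodesic ray (based anywhere). -/
def IsMorseGeodesicRay (γ : ℝ → X) : Prop :=
  GeodesicOn (Set.Ici 0) γ ∧ ∃ M : ℝ → ℝ, IsMorseGauge M ∧ MorseOn M (Set.Ici 0) γ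

/-- `p` is `L`-locally an `M`-Morse `Q`-quasi-geodesic on `I`. -/
def LocMorseQGeoOn (Q : ℝ) (M : ℝ → ℝ) (L : ℝ) (I : Set ℝ) (p : ℝ → X) : Prop :=
  ∀ s ∈ I, ∀ t ∈ I, s ≤ t → t - s ≤ L →
    QGeoOn Q (Set.Icc s t) p ∧ MorseOn M (Set.Icc s t) p

/-- `p` is `L`-locally `M`-Morse on `I`. -/
def LocMorseOn (M : ℝ → ℝ) (L : ℝ) (I : Set ℝ) (p : ℝ → X) : Prop :=
  ∀ s ∈ I, ∀ t ∈ I, s ≤ t → t - s ≤ L → MorseOn M (Set.Icc s t) p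

/-- The Morse local-to-global property for a geodesic metric space. -/
def MLTG (X : Type*) [MetricSpace X] : Prop :=
  ∀ Q : ℝ, 1 ≤ Q → ∀ M : ℝ → ℝ, IsMorseGauge M →
    ∃ (L Q' : ℝ) (M' : ℝ → ℝ), 0 < L ∧ 1 ≤ Q' ∧ IsMorseGauge M' ∧
      ∀ I : Set ℝ, I.OrdConnected → ∀ p : ℝ → X,
        LocMorseQGeoOn Q M L I p → QGeoOn Q' I p ∧ MorseOn M' I p

/-- `X` is a geodesic metric space. -/
def GeodesicSpace (X : Type*) [MetricSpace X] : Prop :=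
  ∀ x y : X, ∃ γ : ℝ → X, γ 0 = x ∧ γ (dist x y) = y ∧
    GeodesicOn (Set.Icc 0 (dist x y)) γ

/-- Gromov hyperbolicity via thin geodesic triangles. -/
def GromovHyperbolic (X : Type*) [MetricSpace X] : Prop :=
  ∃ δ : ℝ, 0 ≤ δ ∧
    ∀ (γ₁ γ₂ γ₃ : ℝ → X) (a₁ b₁ a₂ b₂ a₃ b₃ : ℝ),
      GeodesicOn (Set.Icc a₁ b₁) γ₁ → GeodesicOn (Set.Icc a₂ b₂) γ₂ →
        GeodesicOn (Set.Icc a₃ b₃) γ₃ →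
      γ₁ b₁ = γ₂ a₂ → γ₂ b₂ = γ₃ a₃ → γ₃ b₃ = γ₁ a₁ →
      ∀ s ∈ Set.Icc a₁ b₁,
        ∃ p ∈ γ₂ '' Set.Icc a₂ b₂ ∪ γ₃ '' Set.Icc a₃ b₃, dist (γ₁ s) p ≤ δ

/-- The set of closest-point projections of `x` to `A`. -/
def projSet (A : Set X) (x : X) : Set X :=
  {y ∈ A | ∀ z ∈ A, dist x y ≤ dist x z}

/-- A subset `A` is `C`-contracting. -/
def ContractingSet (C : ℝ) (A : Set X) : Prop :=
  ∀ x : X, Metric.diam (⋃ y ∈ Metric.ball x (Metric.infDist x A), projSet A y) ≤ C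

/-- `γ` is a `C`-contracting geodesic on `I`. -/
def ContractingOn (C : ℝ) (I : Set ℝ) (γ : ℝ → X) : Prop :=
  GeodesicOn I γ ∧ ContractingSet C (γ '' I)

/-- The Morse boundary of `X` (with basepoint `x₀`) is σ-compact. -/
def SigmaCompactMorseBoundary (x₀ : X) : Prop :=
  ∃ Ms : ℕ → ℝ → ℝ, (∀ n, IsMorseGauge (Ms n)) ∧
    ∀ γ : ℝ → X, GeodesicRayFrom x₀ γ → ∀ M : ℝ → ℝ, IsMorseGauge M →
      MorseOn M (Set.Ici 0) γ → ∃ n, MorseOn (Ms n) (Set.Ici 0) γ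

/-- `Ms` is a strong exhaustion of the Morse boundary of `X` based at `x₀`. -/
def IsStrongExhaustion (x₀ : X) (Ms : ℕ → ℝ → ℝ) : Prop :=
  (∀ n, IsMorseGauge (Ms n)) ∧
  (∀ γ : ℝ → X, GeodesicRayFrom x₀ γ → ∀ M : ℝ → ℝ, IsMorseGauge M →
    MorseOn M (Set.Ici 0) γ → ∃ n, MorseOn (Ms n) (Set.Ici 0) γ) ∧
  (∀ M : ℝ → ℝ, IsMorseGauge M → ∃ n, ∀ γ : ℝ → X, GeodesicRayFrom x₀ γ →
    MorseOn M (Set.Ici 0) γ → MorseOn (Ms n) (Set.Ici 0) γ)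

/-- The Morse boundary of `X` (with basepoint `x₀`) is strongly σ-compact. -/
def StronglySigmaCompactMorseBoundary (x₀ : X) : Prop :=
  ∃ Ms : ℕ → ℝ → ℝ, IsStrongExhaustion x₀ Ms

end Space

section Action

variable {G : Type*} [Group G] {X : Type*} [MetricSpace X]

/-- `φ` is an action of `G` on `X` by isometries. -/
def IsIsometricAction (φ : G → X → X) : Prop :=
  (∀ x : X, φ 1 x = x) ∧ (∀ g h : G, ∀ x : X, φ (g * h) x = φ g (φ h x)) ∧
    ∀ g : G, Isometry (φ g)

/-- `φ` is a geometric (proper and cocompact, isometric) action of `G` on `X`. -/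
def IsGeometricAction (φ : G → X → X) : Prop :=
  IsIsometricAction φ ∧
  (∀ (x : X) (r : ℝ), {g : G | dist x (φ g x) ≤ r}.Finite) ∧
  (∃ (x₀ : X) (r : ℝ), ∀ y : X, ∃ g : G, dist y (φ g x₀) ≤ r)

end Action

/-- `G` has contraction: it acts geometrically on some geodesic metric space
containing a strongly contracting geodesic ray. -/
def HasContraction (G : Type*) [Group G] : Prop :=
  ∃ (X : Type) (m : MetricSpace X), ∃ φ : G → X → X,
    letI := m
    IsGeometricAction φ ∧ GeodesicSpace X ∧
      ∃ (γ : ℝ → X) (C : ℝ), 0 ≤ C ∧ GeodesicOn (Set.Ici 0) γ ∧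
        ContractingSet C (γ '' Set.Ici 0)

section Horo

variable {X : Type*} [MetricSpace X]

/-- The horofunction associated to a geodesic ray `γ` based at `x₀`
(for geodesic rays, the infimum below equals the limit of
`t ↦ d(z, γ t) - d(x₀, γ t)` as `t → ∞`, since this function is non-increasing
and bounded below). -/
noncomputable def horofn (x₀ : X) (γ : ℝ → X) (z : X) : ℝ :=
  sInf ((fun t => dist z (γ t) - dist x₀ (γ t)) '' Set.Ici 0)

/-- The horofunction map `y ↦ ρ_y = d(·, y) - d(x₀, y)`. -/
noncomputable def horomap (x₀ y : X) : ContinuousMap X ℝ :=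
  ⟨fun z => dist z y - dist x₀ y, by fun_prop⟩

end Horo

section HoroAction

variable {G : Type*} [Group G] {X : Type*} [MetricSpace X]

/-- The `G`-action on the horofunction compactification:
`(g · f)(z) = f (g⁻¹ z) - f (g⁻¹ x₀)`. -/
noncomputable def horoAction (φ : G → X → X) (hc : ∀ g : G, Continuous (φ g)) (x₀ : X)
    (g : G) (f : ContinuousMap X ℝ) : ContinuousMap X ℝ :=
  ⟨fun z => f (φ g⁻¹ z) - f (φ g⁻¹ x₀), (f.continuous.comp (hc g⁻¹)).sub continuous_const⟩

end HoroAction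

section Words

variable {S : Type*}

/-- A word over the symmetrised alphabet `S ∪ S⁻¹`. -/
abbrev Word (S : Type*) := List (S × Bool)

/-- The formal inverse of a word. -/
def wordInv (w : Word S) : Word S := (w.map fun a => (a.1, !a.2)).reverse

/-- A word is reduced if it has no adjacent cancelling pair. -/
def ReducedWord (w : Word S) : Prop := w.Chain' fun a b => a.1 = b.1 → a.2 = b.2

/-- A word is cyclically reduced if all its cyclic shifts are reduced. -/
def CyclicallyReduced (w : Word S) : Prop := ∀ k : ℕ, ReducedWord (w.rotate k)

/-- The closure of `R ∪ R⁻¹` under cyclic shifts. -/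
def symmClosure (R : Set (Word S)) : Set (Word S) :=
  {w | ∃ r ∈ R, ∃ k : ℕ, w = r.rotate k ∨ w = (wordInv r).rotate k}

/-- A piece: a (non-trivial) common prefix of two distinct elements of `R̄`. -/
def IsPiece (R : Set (Word S)) (p : Word S) : Prop :=
  p ≠ [] ∧ ∃ r₁ ∈ symmClosure R, ∃ r₂ ∈ symmClosure R, r₁ ≠ r₂ ∧ p <+: r₁ ∧ p <+: r₂

/-- The `C'(lam)` small-cancellation condition. -/
def SmallCancellation (R : Set (Word S)) (lam : ℝ) : Prop :=
  (∀ r ∈ R, CyclicallyReduced r) ∧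
  ∀ r ∈ symmClosure R, ∀ p : Word S, IsPiece R p → p <:+: r →
    (p.length : ℝ) < lam * r.length

/-- A viable function. -/
def Viable (f : ℕ → ℝ) : Prop :=
  Monotone f ∧ (∀ n, 6 ≤ f n) ∧ Filter.Tendsto f Filter.atTop Filter.atTop

/-- The pair `(x, R)` satisfies the `C'(1/f)` small-cancellation condition. -/
def PairSmallCancellation (f : ℕ → ℝ) (x : Word S) (R : Set (Word S)) : Prop :=
  ∀ r ∈ symmClosure R, ∀ p : Word S, p ≠ [] → p <:+: x → p <:+: r →
    (p.length : ℝ) < (r.length : ℝ) / f r.length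

/-- The increasing partial small-cancellation condition. -/
def IPSC (R : Set (Word S)) : Prop :=
  ∀ ns : ℕ → ℕ, (∀ i, 0 < ns i) →
    ∃ f : ℕ → ℝ, Viable f ∧
      ∀ K : ℕ, ∃ i : ℕ, K ≤ i ∧ ∃ r ∈ symmClosure R, ∃ x y : Word S,
        r = x ++ y ∧ (ns i : ℝ) ≤ r.length ∧ (r.length : ℝ) / i ≤ x.length ∧
        PairSmallCancellation f x R

end Words

section Cayley

variable {G : Type*} [Group G] {S : Type*}

/-- The element of `G` spelled by a word over `S ∪ S⁻¹`. -/
def evalWord (σ : S → G) (w : Word S) : G :=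
  (w.map fun a => if a.2 then σ a.1 else (σ a.1)⁻¹).prod

/-- The word metric on `G` with respect to the generating map `σ`. -/
noncomputable def wordDist (σ : S → G) (g h : G) : ℕ :=
  sInf {n : ℕ | ∃ w : Word S, w.length = n ∧ g * evalWord σ w = h}

/-- A (discrete) edge path in the Cayley graph: consecutive points are adjacent. -/
def DIsPath (σ : S → G) (I : Set ℤ) (p : ℤ → G) : Prop :=
  ∀ n : ℤ, n ∈ I → n + 1 ∈ I → wordDist σ (p n) (p (n + 1)) ≤ 1

/-- A discrete `Q`-quasi-geodesic in the Cayley graph. -/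
def DQGeoOn (σ : S → G) (Q : ℝ) (I : Set ℤ) (p : ℤ → G) : Prop :=
  DIsPath σ I p ∧ ∀ m ∈ I, ∀ n ∈ I,
    |(n : ℝ) - (m : ℝ)| / Q - Q ≤ (wordDist σ (p m) (p n) : ℝ) ∧
      (wordDist σ (p m) (p n) : ℝ) ≤ Q * |(n : ℝ) - (m : ℝ)| + Q

/-- A discrete geodesic in the Cayley graph. -/
def DGeodesicOn (σ : S → G) (I : Set ℤ) (p : ℤ → G) : Prop :=
  ∀ m ∈ I, ∀ n ∈ I, (wordDist σ (p m) (p n) : ℤ) = |n - m|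

/-- `p` is `M`-Morse on `I` in the Cayley graph. -/
def DMorseOn (σ : S → G) (M : ℝ → ℝ) (I : Set ℤ) (p : ℤ → G) : Prop :=
  ∀ Q : ℝ, 1 ≤ Q → ∀ s ∈ I, ∀ t ∈ I, s ≤ t →
    ∀ (q : ℤ → G) (a b : ℤ), a ≤ b → DQGeoOn σ Q (Set.Icc a b) q →
      q a = p s → q b = p t →
      ∀ n ∈ Set.Icc a b, ∃ m ∈ Set.Icc s t, (wordDist σ (q n) (p m) : ℝ) ≤ M Q

/-- A geodesic ray in the Cayley graph based at the identity. -/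
def DGeodesicRay (σ : S → G) (p : ℤ → G) : Prop :=
  p 0 = 1 ∧ DGeodesicOn σ (Set.Ici 0) p

/-- `p` is `L`-locally an `M`-Morse `Q`-quasi-geodesic. -/
def DLocMorseQGeoOn (σ : S → G) (Q : ℝ) (M : ℝ → ℝ) (L : ℝ) (I : Set ℤ) (p : ℤ → G) : Prop :=
  ∀ s ∈ I, ∀ t ∈ I, s ≤ t → ((t - s : ℤ) : ℝ) ≤ L →
    DQGeoOn σ Q (Set.Icc s t) p ∧ DMorseOn σ M (Set.Icc s t) p

/-- `p` is `L`-locally `M`-Morse. -/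
def DLocMorseOn (σ : S → G) (M : ℝ → ℝ) (L : ℝ) (I : Set ℤ) (p : ℤ → G) : Prop :=
  ∀ s ∈ I, ∀ t ∈ I, s ≤ t → ((t - s : ℤ) : ℝ) ≤ L → DMorseOn σ M (Set.Icc s t) p

/-- The Morse local-to-global property for the Cayley graph of `(G, σ)`. -/
def CayMLTG (σ : S → G) : Prop :=
  ∀ Q : ℝ, 1 ≤ Q → ∀ M : ℝ → ℝ, IsMorseGauge M →
    ∃ (L Q' : ℝ) (M' : ℝ → ℝ), 0 < L ∧ 1 ≤ Q' ∧ IsMorseGauge M' ∧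
      ∀ I : Set ℤ, I.OrdConnected → ∀ p : ℤ → G,
        DLocMorseQGeoOn σ Q M L I p → DQGeoOn σ Q' I p ∧ DMorseOn σ M' I p

/-- The geodesic Morse local-to-global property for the Cayley graph. -/
def CayGeodesicMLTG (σ : S → G) : Prop :=
  ∀ M : ℝ → ℝ, IsMorseGauge M →
    ∃ (L : ℝ) (M' : ℝ → ℝ), 0 < L ∧ IsMorseGauge M' ∧
      ∀ I : Set ℤ, I.OrdConnected → ∀ p : ℤ → G, DGeodesicOn σ I p →
        DLocMorseOn σ M L I p → DMorseOn σ M' I p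

/-- σ-compactness of the Morse boundary of the Cayley graph. -/
def CaySigmaCompact (σ : S → G) : Prop :=
  ∃ Ms : ℕ → ℝ → ℝ, (∀ n, IsMorseGauge (Ms n)) ∧
    ∀ p : ℤ → G, DGeodesicRay σ p → ∀ M : ℝ → ℝ, IsMorseGauge M →
      DMorseOn σ M (Set.Ici 0) p → ∃ n, DMorseOn σ (Ms n) (Set.Ici 0) p

/-- Strong σ-compactness of the Morse boundary of the Cayley graph. -/
def CayStronglySigmaCompact (σ : S → G) : Prop :=
  ∃ Ms : ℕ → ℝ → ℝ, (∀ n, IsMorseGauge (Ms n)) ∧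
    (∀ p : ℤ → G, DGeodesicRay σ p → ∀ M : ℝ → ℝ, IsMorseGauge M →
      DMorseOn σ M (Set.Ici 0) p → ∃ n, DMorseOn σ (Ms n) (Set.Ici 0) p) ∧
    (∀ M : ℝ → ℝ, IsMorseGauge M → ∃ n, ∀ p : ℤ → G, DGeodesicRay σ p →
      DMorseOn σ M (Set.Ici 0) p → DMorseOn σ (Ms n) (Set.Ici 0) p)

/-- The edge path starting at `g` labelled by the word `w`. -/
def pathOfWord (σ : S → G) (g : G) (w : Word S) : ℤ → G :=
  fun n => g * evalWord σ (w.take n.toNat)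

end Cayley

/-- The canonical generating map of a presented group `⟨S | R⟩`. -/
def presGen {S : Type*} (R : Set (Word S)) : S → PresentedGroup (FreeGroup.mk '' R) :=
  fun s => PresentedGroup.of s

end MorseLTG

/-!
A quasi-geodesic that stays far from a `C`-contracting set `A` advances along `A` much more slowly
than it moves itself: cut into pieces of length `2Q(C + 1)`, each piece is too short to reach `A`,
hence moves the closest-point projection by at most `C`, which is less than half of the progress a
`Q`-quasi-geodesic has to make. So an excursion away from `A` between two points near `A` has length
bounded in terms of `C` and `Q`, and contracting geodesics are Morse with a gauge depending only on
`C`. In a Morse-dichotomous space, the gauges attached to the constants `C = 0, 1, 2, …` therefore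
form a strong exhaustion of the Morse boundary.
-/

namespace MorseLTG

section Excursion

variable {α β : Type*} [ConditionallyCompleteLinearOrder α] [TopologicalSpace α] [OrderTopology α]
  [DenselyOrdered α] [LinearOrder β] [TopologicalSpace β] [OrderClosedTopology β]
  {f : α → β} {a b u : α} {d : β}

theorem exists_last_crossing_of_continuousOn (hau : a ≤ u) (hf : ContinuousOn f (Icc a u))
    (ha : f a ≤ d) (hu : d ≤ f u) :
    ∃ p ∈ Icc a u, f p = d ∧ ∀ v ∈ Icc p u, d ≤ f v := by
  have level_compact : IsCompact (Icc a u ∩ f ⁻¹' {d}) :=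
    isCompact_Icc.of_isClosed_subset
      (hf.preimage_isClosed_of_isClosed isClosed_Icc isClosed_singleton) inter_subset_left
  obtain ⟨p, ⟨hp, hpd⟩, p_last⟩ :=
    level_compact.exists_isGreatest (intermediate_value_Icc hau hf ⟨ha, hu⟩)
  refine ⟨p, hp, hpd, fun v hv => ?_⟩
  by_contra! hvd
  have hav : a ≤ v := hp.1.trans hv.1
  obtain ⟨w, hw, hwd⟩ :=
    intermediate_value_Icc hv.2 (hf.mono (Icc_subset_Icc_left hav)) ⟨hvd.le, hu⟩
  have hwp : w ≤ p := p_last ⟨⟨hav.trans hw.1, hw.2⟩, hwd⟩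
  obtain rfl : v = w := le_antisymm hw.1 (hwp.trans hv.1)
  exact hvd.ne hwd

theorem exists_first_crossing_of_continuousOn (hub : u ≤ b) (hf : ContinuousOn f (Icc u b))
    (hb : f b ≤ d) (hu : d ≤ f u) :
    ∃ q ∈ Icc u b, f q = d ∧ ∀ v ∈ Icc u q, d ≤ f v := by
  obtain ⟨q, hq, hqd, hle⟩ := exists_last_crossing_of_continuousOn (α := αᵒᵈ)
    (f := f ∘ OrderDual.ofDual) (a := OrderDual.toDual b) (u := OrderDual.toDual u) hub
    (by rw [Icc_toDual]; exact hf) hb hu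
  exact ⟨OrderDual.ofDual q, hq.symm, hqd, fun v hv => hle (OrderDual.toDual v) hv.symm⟩

theorem exists_excursion_of_continuousOn (hf : ContinuousOn f (Icc a b)) (ha : f a ≤ d)
    (hb : f b ≤ d) (hu : u ∈ Icc a b) (hdu : d ≤ f u) :
    ∃ p ∈ Icc a u, ∃ q ∈ Icc u b, f p = d ∧ f q = d ∧ ∀ v ∈ Icc p q, d ≤ f v := by
  obtain ⟨p, hp, hpd, hpu⟩ := exists_last_crossing_of_continuousOn hu.1
    (hf.mono (Icc_subset_Icc_right hu.2)) ha hdu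
  obtain ⟨q, hq, hqd, huq⟩ := exists_first_crossing_of_continuousOn hu.2
    (hf.mono (Icc_subset_Icc_left hu.1)) hb hdu
  refine ⟨p, hp, q, hq, hpd, hqd, fun v hv => ?_⟩
  exact (le_total v u).elim (fun h => hpu v ⟨hv.1, h⟩) fun h => huq v ⟨h, hv.2⟩

end Excursion

section Restriction

variable {X : Type*} [MetricSpace X] {I J : Set ℝ} {γ : ℝ → X} {M : ℝ → ℝ} {Q C C' : ℝ}

theorem QGeoOn.mono (h : QGeoOn Q I γ) (hJ : J ⊆ I) : QGeoOn Q J γ :=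
  ⟨h.1.mono hJ, fun s hs t ht => h.2 s (hJ hs) t (hJ ht)⟩

theorem MorseOn.mono (h : MorseOn M I γ) (hJ : J ⊆ I) : MorseOn M J γ :=
  fun Q hQ s hs t ht => h Q hQ s (hJ hs) t (hJ ht)

theorem GeodesicOn.mono (h : GeodesicOn I γ) (hJ : J ⊆ I) : GeodesicOn J γ :=
  fun s hs t ht => h s (hJ hs) t (hJ ht)

theorem GeodesicOn.continuousOn (h : GeodesicOn I γ) : ContinuousOn γ I := by
  have lipschitz : LipschitzOnWith 1 γ I := LipschitzOnWith.of_dist_le_mul fun s hs t ht => by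
    rw [h s hs t ht, Real.dist_eq, abs_sub_comm, NNReal.coe_one, one_mul]
  exact lipschitz.continuousOn

theorem ContractingSet.mono {A : Set X} (h : ContractingSet C A) (hCC' : C ≤ C') :
    ContractingSet C' A :=
  fun x => (h x).trans hCC'

end Restriction

section Projection

variable {X : Type*} [MetricSpace X] {A : Set X} {C : ℝ} {p q x y : X}

theorem projSet_nonempty (hA : IsCompact A) (hne : A.Nonempty) (p : X) :
    (projSet A p).Nonempty := by
  obtain ⟨x, hx, hmin⟩ := hA.exists_infDist_eq_dist hne p
  exact ⟨x, hx, fun z hz => hmin ▸ infDist_le_dist_of_mem hz⟩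

theorem dist_eq_infDist_of_mem_projSet (hx : x ∈ projSet A p) : dist p x = infDist p A :=
  le_antisymm ((le_infDist ⟨x, hx.1⟩).2 fun _ hz => hx.2 _ hz) (infDist_le_dist_of_mem hx.1)

theorem ContractingSet.nonneg (hC : ContractingSet C A) (x : X) : 0 ≤ C :=
  diam_nonneg.trans (hC x)

theorem ContractingSet.dist_le (hA : Bornology.IsBounded A) (hC : ContractingSet C A)
    (hpq : dist p q < infDist p A) (hx : x ∈ projSet A p) (hy : y ∈ projSet A q) :
    dist x y ≤ C := by
  refine le_trans (dist_le_diam_of_mem ?_ ?_ ?_) (hC p)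
  · -- `Metric.diam` has the junk value `0` on unbounded sets.
    exact hA.subset (iUnion₂_subset fun _ _ => sep_subset _ _)
  · exact mem_biUnion (mem_ball_self (dist_nonneg.trans_lt hpq)) hx
  · exact mem_biUnion (mem_ball'.2 hpq) hy

theorem ContractingSet.dist_le_of_chain (hA : IsCompact A) (hC : ContractingSet C A)
    {z : ℕ → X} {n : ℕ} (hz : ∀ i ≤ n, dist (z i) (z (i + 1)) < infDist (z i) A)
    (hx : x ∈ projSet A (z 0)) (hy : y ∈ projSet A (z (n + 1))) :
    dist x y ≤ (n + 1) * C := by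
  induction n generalizing y with
  | zero => simpa using hC.dist_le hA.isBounded (hz 0 le_rfl) hx hy
  | succ n ih =>
    obtain ⟨w, hw⟩ := projSet_nonempty hA ⟨x, hx.1⟩ (z (n + 1))
    calc dist x y ≤ dist x w + dist w y := dist_triangle ..
      _ ≤ (n + 1) * C + C :=
        add_le_add (ih (fun i hi => hz i (by lia)) hw) (hC.dist_le hA.isBounded (hz _ le_rfl) hw hy)
      _ = ((n + 1 : ℕ) + 1) * C := by push_cast; ring

theorem ContractingSet.dist_le_of_forall_dist_lt_infDist (hA : IsCompact A)
    (hC : ContractingSet C A) {f : ℝ → X} {a b τ : ℝ} (hab : a ≤ b) (hτ : 0 < τ)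
    (hf : ∀ s ∈ Icc a b, ∀ t ∈ Icc a b, |t - s| ≤ τ → dist (f s) (f t) < infDist (f s) A)
    (hx : x ∈ projSet A (f a)) (hy : y ∈ projSet A (f b)) :
    dist x y ≤ ((b - a) / τ + 1) * C := by
  set n := ⌊(b - a) / τ⌋₊
  set h := (b - a) / (n + 1)
  have hn : (0 : ℝ) < n + 1 := by positivity
  have h_nonneg : 0 ≤ h := div_nonneg (sub_nonneg.2 hab) hn.le
  have h_mul : (n + 1) * h = b - a := mul_div_cancel₀ _ hn.ne'
  have h_le : h ≤ τ := by
    rw [div_le_iff₀ hn, ← div_le_iff₀' hτ]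
    exact (Nat.lt_floor_add_one _).le
  have node_mem (i : ℕ) (hi : i ≤ n + 1) : a + i * h ∈ Icc a b := by
    have hi' : (i : ℝ) ≤ n + 1 := by exact_mod_cast hi
    have : i * h ≤ (n + 1) * h := by gcongr
    exact ⟨le_add_of_nonneg_right (by positivity), by linarith⟩
  have chain : dist x y ≤ (n + 1) * C := by
    refine hC.dist_le_of_chain hA (z := fun i => f (a + i * h)) (fun i hi => ?_) ?_ ?_
    · refine hf _ (node_mem i (by lia)) _ (node_mem (i + 1) (by lia)) ?_
      rwa [show a + (i + 1 : ℕ) * h - (a + i * h) = h by push_cast; ring, abs_of_nonneg h_nonneg]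
    · simpa using hx
    · simpa [h_mul] using hy
  refine chain.trans (mul_le_mul_of_nonneg_right ?_ (hC.nonneg x))
  gcongr
  exact Nat.floor_le (div_nonneg (sub_nonneg.2 hab) hτ.le)

end Projection

section Gauge

/-- The distance from a `C`-contracting set beyond which a `Q`-quasi-geodesic cannot reach the set
within time `2Q(C + 1)`. -/
def excursionRadius (C Q : ℝ) : ℝ := Q * (2 * Q * (C + 1)) + Q + 1

/-- The longest time a `Q`-quasi-geodesic whose endpoints are at distance `excursionRadius C Q` from
a `C`-contracting set can spend beyond that distance. -/
def excursionLength (C Q : ℝ) : ℝ := 2 * Q * (2 * excursionRadius C Q + C + Q)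

/-- The Morse gauge of `C`-contracting geodesics. -/
def contractingGauge (C Q : ℝ) : ℝ := Q * excursionLength C Q + Q + excursionRadius C Q

variable {C : ℝ}

theorem isMorseGauge_contractingGauge (hC : 0 ≤ C) : IsMorseGauge (contractingGauge C) := by
  unfold contractingGauge excursionLength excursionRadius
  refine ⟨fun s hs t ht hst => ?_, by fun_prop, fun t ht => by positivity⟩
  have hs₀ : 0 ≤ s := zero_le_one.trans hs
  have ht₀ : 0 ≤ t := zero_le_one.trans ht
  beta_reduce
  gcongr

end Gauge

section Contracting

variable {X : Type*} [MetricSpace X] {A : Set X} {C Q a b : ℝ} {lam : ℝ → X}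

theorem QGeoOn.sub_le_excursionLength (hl : QGeoOn Q (Icc a b) lam) (hQ : 0 < Q) (hab : a ≤ b)
    (hA : IsCompact A) (hne : A.Nonempty) (hC : ContractingSet C A)
    (ha : infDist (lam a) A ≤ excursionRadius C Q) (hb : infDist (lam b) A ≤ excursionRadius C Q)
    (hfar : ∀ v ∈ Icc a b, excursionRadius C Q ≤ infDist (lam v) A) :
    b - a ≤ excursionLength C Q := by
  have hC₀ : 0 ≤ C := hC.nonneg (lam a)
  obtain ⟨x, hx⟩ := projSet_nonempty hA hne (lam a)
  obtain ⟨y, hy⟩ := projSet_nonempty hA hne (lam b)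
  have projections : dist x y ≤ ((b - a) / (2 * Q * (C + 1)) + 1) * C := by
    refine hC.dist_le_of_forall_dist_lt_infDist hA hab (by positivity) (fun s hs t ht hst => ?_)
      hx hy
    calc dist (lam s) (lam t) ≤ Q * |t - s| + Q := (hl.2 s hs t ht).2
      _ ≤ Q * (2 * Q * (C + 1)) + Q := by gcongr
      _ < excursionRadius C Q := lt_add_one _
      _ ≤ infDist (lam s) A := hfar s hs
  have half_progress : (b - a) / (2 * Q * (C + 1)) * C ≤ (b - a) / (2 * Q) := by
    rw [← div_div, div_mul_eq_mul_div, mul_div_assoc]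
    exact mul_le_of_le_one_right (div_nonneg (sub_nonneg.2 hab) (by positivity))
      ((div_le_one (by positivity)).2 (by linarith))
  have detour : dist (lam a) (lam b) ≤ dist (lam a) x + dist x y + dist (lam b) y :=
    dist_comm y (lam b) ▸ dist_triangle4 (lam a) x y (lam b)
  rw [dist_eq_infDist_of_mem_projSet hx, dist_eq_infDist_of_mem_projSet hy] at detour
  have progress := (hl.2 a (left_mem_Icc.2 hab) b (right_mem_Icc.2 hab)).1
  rw [abs_of_nonneg (sub_nonneg.2 hab)] at progress
  have halves : (b - a) / Q = 2 * ((b - a) / (2 * Q)) := by field_simp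
  rw [excursionLength, ← div_le_iff₀' (by positivity)]
  linarith

theorem QGeoOn.infDist_le_contractingGauge (hl : QGeoOn Q (Icc a b) lam) (hQ : 0 < Q)
    (hA : IsCompact A) (hC : ContractingSet C A) (ha : lam a ∈ A) (hb : lam b ∈ A)
    {u : ℝ} (hu : u ∈ Icc a b) : infDist (lam u) A ≤ contractingGauge C Q := by
  have hC₀ : 0 ≤ C := hC.nonneg (lam a)
  have hR : 0 ≤ excursionRadius C Q := by unfold excursionRadius; positivity
  have hL : 0 ≤ excursionLength C Q := by unfold excursionLength; positivity
  rcases le_total (infDist (lam u) A) (excursionRadius C Q) with near | far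
  · exact near.trans (le_add_of_nonneg_left (by positivity))
  obtain ⟨p, hp, q, hq, hpR, hqR, hpq⟩ := exists_excursion_of_continuousOn
    ((continuous_infDist_pt A).comp_continuousOn hl.1)
    (by simpa [infDist_zero_of_mem ha] using hR) (by simpa [infDist_zero_of_mem hb] using hR)
    hu far
  have length_le : q - p ≤ excursionLength C Q :=
    (hl.mono (Icc_subset_Icc hp.1 hq.2)).sub_le_excursionLength hQ (hp.2.trans hq.1) hA ⟨_, ha⟩ hC
      hpR.le hqR.le hpq
  have time_le : |p - u| ≤ excursionLength C Q := by
    rw [abs_sub_comm, abs_of_nonneg (sub_nonneg.2 hp.2)]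
    linarith [hq.1]
  calc infDist (lam u) A ≤ infDist (lam p) A + dist (lam u) (lam p) := infDist_le_infDist_add_dist
    _ ≤ excursionRadius C Q + (Q * |p - u| + Q) :=
      add_le_add hpR.le (hl.2 u hu p ⟨hp.1, hp.2.trans hu.2⟩).2
    _ ≤ excursionRadius C Q + (Q * excursionLength C Q + Q) := by gcongr
    _ = contractingGauge C Q := add_comm _ _

theorem GeodesicOn.morseOn_contractingGauge {I : Set ℝ} {γ : ℝ → X} (hγ : GeodesicOn I γ)
    (hI : I.OrdConnected)
    (hC : ∀ s ∈ I, ∀ t ∈ I, s ≤ t → ContractingSet C (γ '' Icc s t)) :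
    MorseOn (contractingGauge C) I γ := by
  intro Q hQ s hs t ht hst lam a b _ hl ha hb u hu
  have hA : IsCompact (γ '' Icc s t) :=
    isCompact_Icc.image_of_continuousOn (hγ.mono (hI.out hs ht)).continuousOn
  have hsA : γ s ∈ γ '' Icc s t := mem_image_of_mem γ (left_mem_Icc.2 hst)
  have htA : γ t ∈ γ '' Icc s t := mem_image_of_mem γ (right_mem_Icc.2 hst)
  have near := hl.infDist_le_contractingGauge (zero_lt_one.trans_le hQ) hA (hC s hs t ht hst)
    (ha ▸ hsA) (hb ▸ htA) hu
  obtain ⟨_, ⟨v, hv, rfl⟩, hdist⟩ := hA.exists_infDist_eq_dist ⟨_, hsA⟩ (lam u)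
  exact ⟨v, hv, hdist ▸ near⟩

end Contracting

section Dichotomy

variable {X : Type*} [MetricSpace X] {M : ℝ → ℝ}

/-- A space is Morse-dichotomous if `M`-Morse geodesics are uniformly contracting for every Morse
gauge `M`; the function `M ↦ c(M)` is encoded by the existential `C`. Only geodesic segments are
tested, so that the junk value of `Metric.diam` on unbounded sets plays no role. -/
def MorseDichotomous (X : Type*) [MetricSpace X] : Prop :=
  ∀ M : ℝ → ℝ, IsMorseGauge M → ∃ C : ℝ, ∀ (γ : ℝ → X) (s t : ℝ), s ≤ t →
    GeodesicOn (Icc s t) γ → MorseOn M (Icc s t) γ → ContractingSet C (γ '' Icc s t)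

theorem MorseDichotomous.exists_morseOn_contractingGauge (hX : MorseDichotomous X)
    (hM : IsMorseGauge M) :
    ∃ n : ℕ, ∀ (I : Set ℝ) (γ : ℝ → X), I.OrdConnected → GeodesicOn I γ → MorseOn M I γ →
      MorseOn (contractingGauge n) I γ := by
  obtain ⟨C, hC⟩ := hX M hM
  obtain ⟨n, hn⟩ := exists_nat_ge C
  refine ⟨n, fun I γ hI hγ hMorse => hγ.morseOn_contractingGauge hI fun s hs t ht hst => ?_⟩
  have hsub : Icc s t ⊆ I := hI.out hs ht
  exact (hC γ s t hst (hγ.mono hsub) (hMorse.mono hsub)).mono hn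

end Dichotomy

end MorseLTG

open MorseLTG in
theorem stmt11_general {X : Type*} [MetricSpace X] (hX : MorseDichotomous X) (x₀ : X) :
    StronglySigmaCompactMorseBoundary x₀ := by
  have exhausts (M : ℝ → ℝ) (hM : IsMorseGauge M) : ∃ n : ℕ, ∀ γ : ℝ → X, GeodesicRayFrom x₀ γ →
      MorseOn M (Ici 0) γ → MorseOn (contractingGauge n) (Ici 0) γ := by
    obtain ⟨n, hn⟩ := hX.exists_morseOn_contractingGauge hM
    exact ⟨n, fun γ hγ => hn (Ici 0) γ ordConnected_Ici hγ.2⟩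
  refine ⟨fun n => contractingGauge n, fun n => isMorseGauge_contractingGauge n.cast_nonneg,
    fun γ hγ M hM hMorse => ?_, exhausts⟩
  obtain ⟨n, hn⟩ := exhausts M hM
  exact ⟨n, hn γ hγ hMorse⟩

open MorseLTG in
/-- a Morse-dichotomous proper geodesic space has strongly
σ-compact Morse boundary. -/
theorem stmt11 {X : Type*} [MetricSpace X] [ProperSpace X] (hX : GeodesicSpace X)
    (x₀ : X) (c : (ℝ → ℝ) → ℝ)
    (hdich : ∀ M : ℝ → ℝ, IsMorseGauge M → 0 ≤ c M ∧
      ∀ I : Set ℝ, I.OrdConnected → ∀ γ : ℝ → X, GeodesicOn I γ → MorseOn M I γ →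
        ContractingSet (c M) (γ '' I)) :
    StronglySigmaCompactMorseBoundary x₀ :=
  stmt11_general (fun M hM => ⟨c M, fun γ _ _ _ => (hdich M hM).2 _ ordConnected_Icc γ⟩) x₀
end

section
/- Let X be a proper geodesic metric space with basepoint x₀, and let γ₁ and γ₂ be Morse geodesic rays based at x₀ which represent different points of the Morse boundary, i.e. γ₁ and γ₂ are not at bounded Hausdorff distance from one another. Then the associated horofunctions differ: there exists z ∈ X with ρ[γ₁](z) ≠ ρ[γ₂](z). -/
open Metric Set Filter

/-!
A point `z` whose detour cost `d(x, z) + d(z, y) - d(x, y)` is at most `Q`, where `1 ≤ Q`, lies on a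
`Q`-quasi-geodesic from `x` to `y`, namely the concatenation of geodesics `[x, z] ∪ [z, y]`; if `x`
and `y` lie on an `M`-Morse ray, then `z` is `M Q`-close to that ray. The value `ρ[γ](z) + d(x₀, z)`
is the infimum over `t` of the detour costs of `z` between `x₀` and `γ t`. Since `ρ[γ₁](γ₁ t) = -t`,
the inequality `ρ[γ₂] ≤ ρ[γ₁]` makes the detour costs of `γ₁ t` relative to `γ₂` arbitrarily small,
so `γ₁` stays `M 1`-close to `γ₂`. As both rays start at `x₀`, comparing distances to `x₀` then
gives `d(γ₁ t, γ₂ t) ≤ 2 * M 1`.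
-/

namespace MorseLTG

section LipschitzPaths

variable {Y : Type*} [PseudoMetricSpace Y] {K : NNReal} {f : ℝ → Y} {a b c : ℝ}

theorem dist_le_mul_sub_of_lipschitzOnWith {s : Set ℝ} (hf : LipschitzOnWith K f s) {u v : ℝ}
    (hu : u ∈ s) (hv : v ∈ s) (huv : u ≤ v) : dist (f u) (f v) ≤ K * (v - u) := by
  simpa only [dist_comm u v, Real.dist_eq, abs_of_nonneg (sub_nonneg.2 huv)] using
    hf.dist_le_mul u hu v hv

theorem lipschitzOnWith_Icc_of_Icc_of_Icc (hab : LipschitzOnWith K f (Icc a b))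
    (hbc : LipschitzOnWith K f (Icc b c)) : LipschitzOnWith K f (Icc a c) := by
  refine LipschitzOnWith.of_dist_le_mul fun u hu v hv => ?_
  wlog huv : u ≤ v generalizing u v
  · rw [dist_comm (f u), dist_comm u]
    exact this v hv u hu (le_of_not_ge huv)
  rcases le_total v b with hvb | hbv
  · exact hab.dist_le_mul u ⟨hu.1, huv.trans hvb⟩ v ⟨hv.1, hvb⟩
  rcases le_total b u with hbu | hub
  · exact hbc.dist_le_mul u ⟨hbu, hu.2⟩ v ⟨hbv, hv.2⟩
  rw [dist_comm u v, Real.dist_eq, abs_of_nonneg (sub_nonneg.2 huv)]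
  linarith [dist_triangle (f u) (f b) (f v),
    dist_le_mul_sub_of_lipschitzOnWith hab ⟨hu.1, hub⟩ ⟨hu.1.trans hub, le_rfl⟩ hub,
    dist_le_mul_sub_of_lipschitzOnWith hbc ⟨le_rfl, hbv.trans hv.2⟩ ⟨hbv, hv.2⟩ hbv]

theorem mul_abs_sub_le_dist_add_of_lipschitzOnWith {C : ℝ} (hf : LipschitzOnWith K f (Icc a b))
    (hC : K * (b - a) ≤ dist (f a) (f b) + C) {u v : ℝ} (hu : u ∈ Icc a b) (hv : v ∈ Icc a b) :
    K * |v - u| ≤ dist (f u) (f v) + C := by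
  wlog huv : u ≤ v generalizing u v
  · rw [abs_sub_comm, dist_comm]
    exact this hv hu (le_of_not_ge huv)
  have hau : dist (f a) (f u) ≤ K * (u - a) :=
    dist_le_mul_sub_of_lipschitzOnWith hf ⟨le_rfl, hu.1.trans hu.2⟩ hu hu.1
  have hvb : dist (f v) (f b) ≤ K * (b - v) :=
    dist_le_mul_sub_of_lipschitzOnWith hf hv ⟨hv.1.trans hv.2, le_rfl⟩ hv.2
  rw [abs_of_nonneg (sub_nonneg.2 huv)]
  linarith [dist_triangle4 (f a) (f u) (f v) (f b)]

end LipschitzPaths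

section Space

variable {X : Type*} [MetricSpace X] {x₀ : X} {γ γ₁ γ₂ : ℝ → X} {M : ℝ → ℝ} {Q : ℝ}

theorem QGeoOn.of_lipschitzOnWith {f : ℝ → X} {a b : ℝ} (hQ : 1 ≤ Q)
    (hf : LipschitzOnWith 1 f (Icc a b)) (hab : b - a ≤ dist (f a) (f b) + Q) :
    QGeoOn Q (Icc a b) f := by
  refine ⟨hf.continuousOn, fun s hs t ht => ⟨?_, ?_⟩⟩
  · have hlower : |t - s| ≤ dist (f s) (f t) + Q := by
      simpa only [NNReal.coe_one, one_mul] using mul_abs_sub_le_dist_add_of_lipschitzOnWith hf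
        (by rwa [NNReal.coe_one, one_mul]) hs ht
    linarith [div_le_self (abs_nonneg (t - s)) hQ]
  · have hupper : dist (f s) (f t) ≤ |t - s| := by
      simpa only [NNReal.coe_one, one_mul, Real.dist_eq, abs_sub_comm s] using
        hf.dist_le_mul s hs t ht
    linarith [le_mul_of_one_le_left (abs_nonneg (t - s)) hQ]

theorem GeodesicOn.lipschitzOnWith {I : Set ℝ} (hγ : GeodesicOn I γ) : LipschitzOnWith 1 γ I :=
  LipschitzOnWith.of_dist_le_mul fun s hs t ht => by
    rw [hγ s hs t ht, NNReal.coe_one, one_mul, dist_comm, Real.dist_eq]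

theorem GeodesicSpace.exists_lipschitzOnWith_through (hX : GeodesicSpace X) (x z y : X) :
    ∃ f : ℝ → X, f 0 = x ∧ f (dist x z) = z ∧ f (dist x z + dist z y) = y ∧
      LipschitzOnWith 1 f (Icc 0 (dist x z + dist z y)) := by
  obtain ⟨α, hα_zero, hα_end, hα⟩ := hX x z
  obtain ⟨β, hβ_zero, hβ_end, hβ⟩ := hX z y
  let f : ℝ → X := fun u => if u ≤ dist x z then α u else β (u - dist x z)
  have hf_left : ∀ u ≤ dist x z, f u = α u := fun u hu => if_pos hu
  have hf_right : ∀ u, dist x z ≤ u → f u = β (u - dist x z) := by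
    intro u hu
    rcases hu.eq_or_lt with rfl | hlt
    · rw [hf_left _ le_rfl, hα_end, sub_self, hβ_zero]
    · exact if_neg (not_le.2 hlt)
  have hleft : GeodesicOn (Icc 0 (dist x z)) f := fun s hs t ht => by
    rw [hf_left s hs.2, hf_left t ht.2, hα s hs t ht]
  have hright : GeodesicOn (Icc (dist x z) (dist x z + dist z y)) f := fun s hs t ht => by
    rw [hf_right s hs.1, hf_right t ht.1,
      hβ _ ⟨sub_nonneg.2 hs.1, sub_le_iff_le_add'.2 hs.2⟩ _
        ⟨sub_nonneg.2 ht.1, sub_le_iff_le_add'.2 ht.2⟩, sub_sub_sub_cancel_right]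
  refine ⟨f, ?_, ?_, ?_,
    lipschitzOnWith_Icc_of_Icc_of_Icc hleft.lipschitzOnWith hright.lipschitzOnWith⟩
  · rw [hf_left 0 dist_nonneg, hα_zero]
  · rw [hf_left _ le_rfl, hα_end]
  · rw [hf_right _ (le_add_of_nonneg_right dist_nonneg), add_sub_cancel_left, hβ_end]

theorem MorseOn.exists_dist_le_of_detour_le (hX : GeodesicSpace X) {I : Set ℝ}
    (hM : MorseOn M I γ) (hQ : 1 ≤ Q) {s t : ℝ} (hs : s ∈ I) (ht : t ∈ I) (hst : s ≤ t) {z : X}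
    (hz : dist (γ s) z + dist z (γ t) ≤ dist (γ s) (γ t) + Q) :
    ∃ v ∈ Icc s t, dist z (γ v) ≤ M Q := by
  obtain ⟨f, hf_start, hf_mid, hf_end, hf⟩ := hX.exists_lipschitzOnWith_through (γ s) z (γ t)
  have hquasi : QGeoOn Q (Icc 0 (dist (γ s) z + dist z (γ t))) f :=
    QGeoOn.of_lipschitzOnWith hQ hf (by rwa [hf_start, hf_end, sub_zero])
  simpa only [hf_mid] using
    hM Q hQ s hs t ht hst f 0 _ (by positivity) hquasi hf_start hf_end (dist (γ s) z)
      ⟨dist_nonneg, le_add_of_nonneg_right dist_nonneg⟩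

theorem horofn_le (x₀ : X) (γ : ℝ → X) (z : X) {t : ℝ} (ht : 0 ≤ t) :
    horofn x₀ γ z ≤ dist z (γ t) - dist x₀ (γ t) := by
  refine csInf_le ⟨-dist x₀ z, ?_⟩ ⟨t, ht, rfl⟩
  rintro _ ⟨s, -, rfl⟩
  linarith [dist_triangle x₀ z (γ s)]

theorem MorseOn.exists_dist_le_of_horofn_lt (hX : GeodesicSpace X) (hM : MorseOn M (Ici 0) γ)
    (hQ : 1 ≤ Q) {z : X} (hz : horofn (γ 0) γ z < Q - dist (γ 0) z) :
    ∃ v ∈ Ici (0 : ℝ), dist z (γ v) ≤ M Q := by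
  obtain ⟨_, ⟨s, hs, rfl⟩, hlt⟩ := exists_lt_of_csInf_lt (nonempty_Ici.image _) hz
  obtain ⟨v, hv, hle⟩ :=
    hM.exists_dist_le_of_detour_le hX hQ self_mem_Ici hs hs (z := z) (by linarith)
  exact ⟨v, hv.1, hle⟩

theorem GeodesicRayFrom.dist_basepoint (hγ : GeodesicRayFrom x₀ γ) {t : ℝ} (ht : 0 ≤ t) :
    dist x₀ (γ t) = t := by
  rw [← hγ.1, hγ.2 0 self_mem_Ici t ht, sub_zero, abs_of_nonneg ht]

theorem GeodesicRayFrom.horofn_apply_le (hγ : GeodesicRayFrom x₀ γ) {t : ℝ} (ht : 0 ≤ t) :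
    horofn x₀ γ (γ t) ≤ -t := by
  simpa only [dist_self, zero_sub, hγ.dist_basepoint ht] using horofn_le x₀ γ (γ t) ht

theorem GeodesicRayFrom.dist_le_two_mul_dist (h₁ : GeodesicRayFrom x₀ γ₁)
    (h₂ : GeodesicRayFrom x₀ γ₂) {s t : ℝ} (hs : 0 ≤ s) (ht : 0 ≤ t) :
    dist (γ₁ s) (γ₂ s) ≤ 2 * dist (γ₁ s) (γ₂ t) := by
  have hparam : |s - t| ≤ dist (γ₁ s) (γ₂ t) := by
    simpa only [dist_comm _ x₀, h₁.dist_basepoint hs, h₂.dist_basepoint ht] using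
      abs_dist_sub_le (γ₁ s) (γ₂ t) x₀
  linarith [dist_triangle (γ₁ s) (γ₂ t) (γ₂ s), h₂.2 t ht s hs]

theorem MorseOn.dist_le_of_horofn_le (hX : GeodesicSpace X) (h₁ : GeodesicRayFrom x₀ γ₁)
    (h₂ : GeodesicRayFrom x₀ γ₂) (hM : MorseOn M (Ici 0) γ₂) {t : ℝ} (ht : 0 ≤ t)
    (hle : horofn x₀ γ₂ (γ₁ t) ≤ horofn x₀ γ₁ (γ₁ t)) :
    dist (γ₁ t) (γ₂ t) ≤ 2 * M 1 := by
  obtain ⟨v, hv, hdist⟩ : ∃ v ∈ Ici (0 : ℝ), dist (γ₁ t) (γ₂ v) ≤ M 1 := by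
    refine hM.exists_dist_le_of_horofn_lt hX le_rfl ?_
    rw [h₂.1, h₁.dist_basepoint ht]
    linarith [h₁.horofn_apply_le ht]
  linarith [h₁.dist_le_two_mul_dist h₂ ht hv]

end Space

end MorseLTG

open MorseLTG in
theorem stmt13_general {X : Type*} [MetricSpace X] (hX : GeodesicSpace X)
    (x₀ : X) (γ₁ γ₂ : ℝ → X)
    (h₁ : GeodesicRayFrom x₀ γ₁) (h₂ : GeodesicRayFrom x₀ γ₂)
    {M : ℝ → ℝ} (hM : MorseOn M (Set.Ici 0) γ₂)
    (hdiff : ¬ ∃ K : ℝ,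
      (∀ s ∈ Set.Ici (0 : ℝ), ∃ t ∈ Set.Ici (0 : ℝ), dist (γ₁ s) (γ₂ t) ≤ K) ∧
      (∀ t ∈ Set.Ici (0 : ℝ), ∃ s ∈ Set.Ici (0 : ℝ), dist (γ₁ s) (γ₂ t) ≤ K)) :
    ∃ z : X, horofn x₀ γ₁ z < horofn x₀ γ₂ z := by
  by_contra! hle
  have hclose : ∀ t ∈ Ici (0 : ℝ), dist (γ₁ t) (γ₂ t) ≤ 2 * M 1 := fun t ht =>
    hM.dist_le_of_horofn_le hX h₁ h₂ ht (hle (γ₁ t))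
  exact hdiff ⟨2 * M 1, fun s hs => ⟨s, hs, hclose s hs⟩, fun t ht => ⟨t, ht, hclose t ht⟩⟩

open MorseLTG in
/-- two Morse geodesic rays representing different points of the
Morse boundary have different horofunctions. -/
theorem stmt13 {X : Type*} [MetricSpace X] [ProperSpace X] (hX : GeodesicSpace X)
    (x₀ : X) (γ₁ γ₂ : ℝ → X)
    (h₁ : GeodesicRayFrom x₀ γ₁) (h₂ : GeodesicRayFrom x₀ γ₂)
    (hm₁ : ∃ M : ℝ → ℝ, IsMorseGauge M ∧ MorseOn M (Set.Ici 0) γ₁)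
    (hm₂ : ∃ M : ℝ → ℝ, IsMorseGauge M ∧ MorseOn M (Set.Ici 0) γ₂)
    (hdiff : ¬ ∃ K : ℝ,
      (∀ s ∈ Set.Ici (0 : ℝ), ∃ t ∈ Set.Ici (0 : ℝ), dist (γ₁ s) (γ₂ t) ≤ K) ∧
      (∀ t ∈ Set.Ici (0 : ℝ), ∃ s ∈ Set.Ici (0 : ℝ), dist (γ₁ s) (γ₂ t) ≤ K)) :
    ∃ z : X, horofn x₀ γ₁ z ≠ horofn x₀ γ₂ z := by
  obtain ⟨M, -, hM⟩ := hm₂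
  exact (stmt13_general hX x₀ γ₁ γ₂ h₁ h₂ hM hdiff).imp fun _ => ne_of_lt
end
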